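/- Let X be a metric space and let f, g be continuous self-maps of X. If the family {f, g∘f, g∘g} is topologically contractive, then the family {f, g} is topologically contractive. -/

import Mathlib

/-- A family `F` of self-maps of a metric space `X` is topologically contractive if for
every `ε > 0` there is `k` such that every composition of `k` maps from `F` has image of
diameter less than `ε`. -/
def TopContractive {X : Type*} [MetricSpace X] (F : Set (X → X)) : Prop :=
  ∀ ε > (0 : ℝ), ∃ k : ℕ, ∀ l : List (X → X), (∀ f ∈ l, f ∈ F) → l.length = k →
    Metric.diam (Set.range (l.foldr (· ∘ ·) id)) < ε

open scoped Pointwise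

section Monoid

open Submonoid

variable {M : Type*} [Monoid M]

theorem mem_pow_iff_exists_list_prod {F : Set M} {k : ℕ} {a : M} :
    a ∈ F ^ k ↔ ∃ l : List M, (∀ x ∈ l, x ∈ F) ∧ l.length = k ∧ l.prod = a := by
  rw [Set.mem_pow]
  constructor
  · rintro ⟨w, rfl⟩
    exact ⟨List.ofFn fun i ↦ (w i : M), by simp [List.mem_ofFn], List.length_ofFn, rfl⟩
  · rintro ⟨l, hl, rfl, rfl⟩
    exact ⟨fun i ↦ ⟨l.get i, hl _ (l.get_mem i)⟩, by simp⟩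

theorem commute_coe_closure_self (F : Set M) : Commute (closure F : Set M) F := by
  apply Set.Subset.antisymm
  · rintro _ ⟨s, hs, a, ha, rfl⟩
    induction hs using closure_induction_left with
    | one => exact ⟨a, ha, 1, one_mem _, by simp⟩
    | mul_left b hb s hs _ =>
      exact ⟨b, hb, s * a, mul_mem hs (subset_closure ha), (mul_assoc b s a).symm⟩
  · rintro _ ⟨a, ha, s, hs, rfl⟩
    induction hs using closure_induction_right with
    | one => exact ⟨1, one_mem _, a, ha, by simp⟩
    | mul_right s hs b hb _ =>
      exact ⟨a * s, mul_mem (subset_closure ha) hs, b, hb, mul_assoc a s b⟩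

/-- Each block of `n` factors from `F` splits off one factor from `G`, and what is left over from
`F` can be moved behind the remaining blocks. -/
theorem pow_mul_subset_pow_mul_closure {F G : Set M} {n : ℕ}
    (h : F ^ n ⊆ G * (closure F : Set M)) (k : ℕ) :
    F ^ (n * k) ⊆ G ^ k * (closure F : Set M) := by
  induction k with
  | zero => simp [one_mem]
  | succ k ih =>
    calc F ^ (n * (k + 1))
        = F ^ n * F ^ (n * k) := by rw [← pow_add, Nat.mul_succ, add_comm]
      _ ⊆ (G * closure F) * F ^ (n * k) := by gcongr
      _ = G * (closure F * F ^ (n * k)) := mul_assoc ..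
      _ = G * (F ^ (n * k) * closure F) := by rw [(commute_coe_closure_self F).pow_right _]
      _ ⊆ G * ((G ^ k * closure F) * closure F) := by gcongr
      _ = G ^ (k + 1) * closure F := by rw [mul_assoc, coe_mul_self_eq, ← mul_assoc, pow_succ']

/-- The words `a`, `ba`, `bb` form a complete prefix code over the letters `a`, `b`. -/
theorem pair_pow_two_subset_mul_closure (a b : M) :
    ({a, b} : Set M) ^ 2 ⊆ {a, b * a, b * b} * (closure {a, b} : Set M) := by
  rw [pow_two]
  rintro _ ⟨x, rfl | rfl, y, hy, rfl⟩
  · exact ⟨x, by simp, y, subset_closure hy, rfl⟩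
  · exact ⟨x * y, by rcases hy with rfl | rfl <;> simp, 1, one_mem _, mul_one _⟩

end Monoid

section TopContractive

variable {X : Type*} [MetricSpace X]

theorem topContractive_iff_forall_mem_pow {F : Set (Function.End X)} :
    TopContractive F ↔ ∀ ε > (0 : ℝ), ∃ k : ℕ, ∀ φ ∈ F ^ k, Metric.diam (Set.range φ) < ε := by
  simp only [mem_pow_iff_exists_list_prod]
  refine forall₂_congr fun ε _ ↦ exists_congr fun k ↦ ⟨?_, fun h l hl hk ↦ h _ ⟨l, hl, hk, rfl⟩⟩
  rintro h _ ⟨l, hl, hk, rfl⟩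
  exact h l hl hk

/-- `Metric.diam` is `0` on unbounded sets, so the empty composition is enough. -/
theorem topContractive_of_not_boundedSpace (hX : ¬BoundedSpace X) (F : Set (Function.End X)) :
    TopContractive F := by
  rw [topContractive_iff_forall_mem_pow]
  refine fun ε hε ↦ ⟨0, fun φ hφ ↦ ?_⟩
  obtain rfl : φ = id := Set.mem_one.1 (pow_zero F ▸ hφ)
  rwa [Set.range_id, Metric.diam_eq_zero_of_unbounded (mt Bornology.isBounded_univ.1 hX)]

/-- A long composition from `F` starts with a long composition from `G`, hence its range is
contained in the range of the latter. -/
theorem topContractive_pair_of_topContractive_triple_general {F G : Set (Function.End X)} {n : ℕ}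
    (hFG : F ^ n ⊆ G * (Submonoid.closure F : Set (Function.End X))) (hG : TopContractive G) :
    TopContractive F := by
  by_cases hX : BoundedSpace X
  · rw [topContractive_iff_forall_mem_pow] at hG ⊢
    intro ε hε
    obtain ⟨k, hk⟩ := hG ε hε
    refine ⟨n * k, fun φ hφ ↦ ?_⟩
    obtain ⟨γ, hγ, σ, -, rfl⟩ := pow_mul_subset_pow_mul_closure hFG k hφ
    calc Metric.diam (Set.range (γ ∘ σ))
        ≤ Metric.diam (Set.range γ) :=
          Metric.diam_mono (Set.range_comp_subset_range σ γ) (Bornology.IsBounded.all _)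
      _ < ε := hk γ hγ
  · exact topContractive_of_not_boundedSpace hX F

end TopContractive

/-- If `{f, g ∘ f, g ∘ g}` is topologically contractive, then so is `{f, g}`. -/
theorem topContractive_pair_of_topContractive_triple
    {X : Type*} [MetricSpace X] (f g : X → X)
    (hf : Continuous f) (hg : Continuous g)
    (h : TopContractive {f, g ∘ f, g ∘ g}) :
    TopContractive {f, g} :=
  topContractive_pair_of_topContractive_triple_general
    (pair_pow_two_subset_mul_closure (M := Function.End X) f g) h
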